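/- Let s ∈ (0,1), γ ∈ ℝ with γ + 2s > 0, and let δ₁, δ₂ be real numbers with δ₁ ≤ 1, δ₂ > 0, and (δ₁ − 1)/δ₂ ≤ γ + 2s − 2. Let v, y, η ∈ ℝ^d and set A = 1 + |v|² + |η|² + |v∧η|² and B = 1 + |v|² + |y|² + |v∧y|². If A ≤ B^{δ₂}, then ⟨v⟩² · B^{δ₁−1} ≤ ⟨v⟩^{γ+2s}. -/

import Mathlib

/-!
By Cauchy–Schwarz `|v∧η|² ≥ 0`, so `⟨v⟩² ≤ A ≤ B^δ₂`. Raising this to the nonpositive power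
`(δ₁ - 1)/δ₂` reverses it: `B^(δ₁ - 1) ≤ ⟨v⟩^(2(δ₁ - 1)/δ₂)`. Since `⟨v⟩ ≥ 1`, the right-hand side
is at most `⟨v⟩^(m - 2)` for every `m` with `2(δ₁ - 1)/δ₂ ≤ m - 2`. As `(δ₁ - 1)/δ₂` is nonpositive,
`(δ₁ - 1)/δ₂ ≤ γ + 2s - 2` ensures this for `m = γ + 2s`.
-/

open scoped RealInnerProductSpace

theorem rpow_le_rpow_div_of_le_rpow {x b p q : ℝ} (hx : 0 < x) (hb : 0 ≤ b) (hq : q ≠ 0)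
    (hpq : p / q ≤ 0) (h : x ≤ b ^ q) : b ^ p ≤ x ^ (p / q) := calc
  b ^ p = (b ^ q) ^ (p / q) := by rw [← Real.rpow_mul hb, mul_div_cancel₀ p hq]
  _ ≤ x ^ (p / q) := Real.rpow_le_rpow_of_nonpos hx h hpq

section

variable {E : Type*} [Norm E]

/-- The Japanese bracket `⟨v⟩ = (1 + |v|²)^{1/2}`. -/
noncomputable def japaneseBracket (v : E) : ℝ :=
  Real.sqrt (1 + ‖v‖ ^ 2)

theorem japaneseBracket_sq (v : E) : japaneseBracket v ^ 2 = 1 + ‖v‖ ^ 2 :=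
  Real.sq_sqrt (by positivity)

theorem one_le_japaneseBracket (v : E) : 1 ≤ japaneseBracket v :=
  Real.one_le_sqrt.mpr (le_add_of_nonneg_right (sq_nonneg ‖v‖))

end

section

variable {E : Type*} [SeminormedAddCommGroup E] [InnerProductSpace ℝ E]

/-- The squared norm `|v∧w|²` of the exterior product, written as the Gram determinant of `v`
and `w`. -/
def wedgeSq (v w : E) : ℝ :=
  ‖v‖ ^ 2 * ‖w‖ ^ 2 - ⟪v, w⟫ ^ 2

/-- The weight `1 + |v|² + |w|² + |v∧w|²`, which is `A` for `w = η` and `B` for `w = y`. -/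
def wedgeWeight (v w : E) : ℝ :=
  1 + ‖v‖ ^ 2 + ‖w‖ ^ 2 + wedgeSq v w

theorem wedgeSq_nonneg (v w : E) : 0 ≤ wedgeSq v w := by
  have cauchy_schwarz : ⟪v, w⟫ ^ 2 ≤ (‖v‖ * ‖w‖) ^ 2 :=
    sq_le_sq' (neg_le_of_abs_le (abs_real_inner_le_norm v w)) (real_inner_le_norm v w)
  rw [wedgeSq, ← mul_pow]
  exact sub_nonneg.mpr cauchy_schwarz

theorem japaneseBracket_sq_le_wedgeWeight (v w : E) : japaneseBracket v ^ 2 ≤ wedgeWeight v w := by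
  rw [japaneseBracket_sq, wedgeWeight]
  linarith [sq_nonneg ‖w‖, wedgeSq_nonneg v w]

theorem wedgeWeight_nonneg (v w : E) : 0 ≤ wedgeWeight v w :=
  (sq_nonneg _).trans (japaneseBracket_sq_le_wedgeWeight v w)

theorem stmt_7_general {δ₁ δ₂ m : ℝ} (hδ₁ : δ₁ ≤ 1) (hδ₂ : 0 < δ₂)
    (hm : 2 * ((δ₁ - 1) / δ₂) ≤ m - 2) {v y η : E}
    (hsupp : wedgeWeight v η ≤ wedgeWeight v y ^ δ₂) :
    japaneseBracket v ^ (2 : ℝ) * wedgeWeight v y ^ (δ₁ - 1) ≤ japaneseBracket v ^ m := by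
  set J := japaneseBracket v
  set p := (δ₁ - 1) / δ₂
  have hJ : 1 ≤ J := one_le_japaneseBracket v
  have hJ₀ : 0 < J := one_pos.trans_le hJ
  have hp : p ≤ 0 := div_nonpos_of_nonpos_of_nonneg (sub_nonpos.mpr hδ₁) hδ₂.le
  have hJ_le : J ^ (2 : ℝ) ≤ wedgeWeight v y ^ δ₂ := by
    rw [Real.rpow_two]
    exact (japaneseBracket_sq_le_wedgeWeight v η).trans hsupp
  calc
    J ^ (2 : ℝ) * wedgeWeight v y ^ (δ₁ - 1) ≤ J ^ (2 : ℝ) * (J ^ (2 : ℝ)) ^ p := by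
      gcongr
      exact rpow_le_rpow_div_of_le_rpow (by positivity) (wedgeWeight_nonneg v y) hδ₂.ne' hp hJ_le
    _ = J ^ (2 + 2 * p) := by rw [← Real.rpow_mul hJ₀.le, ← Real.rpow_add hJ₀]
    _ ≤ J ^ m := Real.rpow_le_rpow_of_exponent_le hJ (by linarith)

end

/-- Bound for the error term `I₂` on the support of the cutoff:
if `A ≤ B^δ₂` then `⟨v⟩²·B^{δ₁−1} ≤ ⟨v⟩^{γ+2s}`. -/
theorem stmt_7 (s γ : ℝ) (hs0 : 0 < s) (hs1 : s < 1) (hγ : 0 < γ + 2 * s)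
    (δ₁ δ₂ : ℝ) (hδ₁ : δ₁ ≤ 1) (hδ₂ : 0 < δ₂)
    (hδ : (δ₁ - 1) / δ₂ ≤ γ + 2 * s - 2)
    (d : ℕ) (v y η : EuclideanSpace ℝ (Fin d))
    (A B : ℝ)
    (hA : A = 1 + ‖v‖ ^ 2 + ‖η‖ ^ 2 + (‖v‖ ^ 2 * ‖η‖ ^ 2 - ⟪v, η⟫ ^ 2))
    (hB : B = 1 + ‖v‖ ^ 2 + ‖y‖ ^ 2 + (‖v‖ ^ 2 * ‖y‖ ^ 2 - ⟪v, y⟫ ^ 2))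
    (hsupp : A ≤ B ^ δ₂) :
    Real.sqrt (1 + ‖v‖ ^ 2) ^ (2 : ℝ) * B ^ (δ₁ - 1) ≤
      Real.sqrt (1 + ‖v‖ ^ 2) ^ (γ + 2 * s) := by
  subst hA hB
  have hp : (δ₁ - 1) / δ₂ ≤ 0 := div_nonpos_of_nonpos_of_nonneg (by linarith) hδ₂.le
  exact stmt_7_general (v := v) (y := y) (η := η) hδ₁ hδ₂ (by linarith) hsupp
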